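/- Let X be a compact metric space, f : X → X continuous surjective, and suppose X = ⋃_{i∈I} X_i where each X_i is closed and f(X_i) = X_i. Then h(f) = sup_{i∈I} h(f|_{X_i}). -/

import Mathlib

/-!
Fix a scale `V` and reals `s > r > sup h(f|_{X_i})`. For some `n`, each `X_i` lies in an open set
`G` covered by at most `exp (r * n)` sets that are `V`-small for `n` iterates. By compactness such
pairs `(G, n)` can be taken from a countable family, although there may be uncountably many `X_i`.

By invariance, points of `X_i` return to `G` at all multiples of `n`. The points doing so `q` times
form an open set which, for `T = n * q` iterates, is covered by at most
`exp (r * T) ≤ ε * exp (s * T)` sets that are `V`-small, where `ε` is as small as desired once `q`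
is large. Since the family is countable, the numbers `ε` can be given total sum at most `1` before a
finite subcover is extracted. Splitting each orbit at its first `T` iterates gives the renewal
inequality `N (n) ≤ ∑ ε * exp (s * T) * N (n - T)` for the covering numbers `N`, hence
`N (n) = O (exp (s * n))`.
-/

open Set Filter Dynamics SetRel UniformSpace
open scoped Uniformity Topology

/-- `F` is covered by at most `c` sets, any two points of each of which stay `U`-close during the
first `n` iterates of `f`. Unlike the dynamical balls in `IsDynCoverOf`, such covers can be
concatenated along orbits without enlarging `U`. -/
def HasSmallDynCover {X : Type*} (f : X → X) (U : SetRel X X) (F : Set X) (n : ℕ) (c : ℝ) : Prop :=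
  ∃ S : Finset (Set X), (S.card : ℝ) ≤ c ∧ F ⊆ ⋃₀ (S : Set (Set X)) ∧
    ∀ A ∈ S, ∀ x ∈ A, ∀ y ∈ A, (x, y) ∈ dynEntourage f U n

namespace HasSmallDynCover

variable {X : Type*} {f : X → X} {U : SetRel X X} {F G : Set X} {m n : ℕ} {c d : ℝ}

lemma mono (h : HasSmallDynCover f U F n c) (hGF : G ⊆ F) (hmn : m ≤ n) (hcd : c ≤ d) :
    HasSmallDynCover f U G m d := by
  obtain ⟨S, hSc, hFS, hS⟩ := h
  exact ⟨S, hSc.trans hcd, hGF.trans hFS,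
    fun A hA x hx y hy ↦ dynEntourage_antitone f U hmn (hS A hA x hx y hy)⟩

lemma nonneg (h : HasSmallDynCover f U F n c) : 0 ≤ c := by
  obtain ⟨S, hSc, -⟩ := h
  exact (Nat.cast_nonneg _).trans hSc

lemma zero (F : Set X) (hc : 1 ≤ c) : HasSmallDynCover f U F 0 c :=
  ⟨{univ}, by simpa using hc, by simp, by simp⟩

lemma biUnion_ball {V : SetRel X X} [V.IsSymm] (hVU : V ○ V ⊆ U) (n : ℕ) (T : Finset X) :
    HasSmallDynCover f U (⋃ x ∈ T, ball x (dynEntourage f V n)) n T.card := by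
  classical
  refine ⟨T.image fun x ↦ ball x (dynEntourage f V n), mod_cast Finset.card_image_le, ?_, ?_⟩
  · exact iUnion₂_subset fun x hx ↦
      subset_sUnion_of_mem (Finset.mem_coe.2 (Finset.mem_image_of_mem _ hx))
  · intro A hA y hy z hz
    obtain ⟨x, -, rfl⟩ := Finset.mem_image.1 hA
    exact dynEntourage_monotone f n hVU (dynEntourage_comp_subset f V V n
      ⟨x, SetRel.symm (dynEntourage f V n) hy, hz⟩)

lemma biUnion {ι : Type*} {t : Finset ι} {E : ι → Set X} {c : ι → ℝ}
    (h : ∀ i ∈ t, HasSmallDynCover f U (E i) n (c i)) :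
    HasSmallDynCover f U (⋃ i ∈ t, E i) n (∑ i ∈ t, c i) := by
  classical
  choose! S hSc hES hS using h
  refine ⟨t.biUnion S, ?_, ?_, ?_⟩
  · calc ((t.biUnion S).card : ℝ) ≤ ∑ i ∈ t, ((S i).card : ℝ) := mod_cast Finset.card_biUnion_le
      _ ≤ ∑ i ∈ t, c i := Finset.sum_le_sum hSc
  · exact iUnion₂_subset fun i hi ↦ (hES i hi).trans
      (sUnion_subset_sUnion (Finset.coe_subset.2 (Finset.subset_biUnion_of_mem S hi)))
  · intro A hA
    obtain ⟨i, hi, hAi⟩ := Finset.mem_biUnion.1 hA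
    exact hS i hi A hAi

lemma inter_preimage (hF : HasSmallDynCover f U F m c) (hG : HasSmallDynCover f U G n d) :
    HasSmallDynCover f U (F ∩ f^[m] ⁻¹' G) (m + n) (c * d) := by
  classical
  have hc := hF.nonneg
  obtain ⟨S, hSc, hFS, hS⟩ := hF
  obtain ⟨R, hRc, hGR, hR⟩ := hG
  refine ⟨Finset.image₂ (fun A B ↦ A ∩ f^[m] ⁻¹' B) S R, ?_, ?_, ?_⟩
  · calc ((Finset.image₂ (fun A B ↦ A ∩ f^[m] ⁻¹' B) S R).card : ℝ)
        ≤ S.card * R.card := mod_cast Finset.card_image₂_le _ _ _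
      _ ≤ c * d := by gcongr
  · rintro x ⟨hxF, hxG⟩
    obtain ⟨A, hA, hxA⟩ := hFS hxF
    obtain ⟨B, hB, hxB⟩ := hGR hxG
    exact ⟨_, Finset.mem_coe.2 (Finset.mem_image₂_of_mem hA hB), hxA, hxB⟩
  · intro C hC x hx y hy
    obtain ⟨A, hA, B, hB, rfl⟩ := Finset.mem_image₂.1 hC
    refine mem_dynEntourage.2 fun k hk ↦ ?_
    rcases lt_or_ge k m with hkm | hmk
    · exact mem_dynEntourage.1 (hS A hA x hx.1 y hy.1) k hkm
    · have hclose := mem_dynEntourage.1 (hR B hB _ hx.2 _ hy.2) (k - m) (by omega)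
      rwa [← Function.iterate_add_apply, ← Function.iterate_add_apply, Nat.sub_add_cancel hmk]
        at hclose

lemma iInter_preimage (h : HasSmallDynCover f U F n c) (q : ℕ) :
    HasSmallDynCover f U (⋂ j < q, f^[n * j] ⁻¹' F) (n * q) (c ^ q) := by
  induction q with
  | zero => exact zero _ (by simp)
  | succ q ih =>
    refine (h.inter_preimage ih).mono (fun x hx ↦ ?_) (by rw [Nat.mul_succ, Nat.add_comm])
      (pow_succ' c q).ge
    rw [mem_iInter₂] at hx
    refine ⟨by simpa using hx 0 q.succ_pos, mem_iInter₂.2 fun j hj ↦ ?_⟩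
    rw [Set.mem_preimage, ← Function.iterate_add_apply, ← Nat.mul_succ]
    exact hx (j + 1) (Nat.succ_lt_succ hj)

lemma exists_isOpen_mul_exp [TopologicalSpace X] (hf : Continuous f) (hGo : IsOpen G) (hn : 0 < n)
    {r s ε : ℝ} (hG : HasSmallDynCover f U G n (Real.exp (r * n))) (hrs : r < s) (hε : 0 < ε) :
    ∃ T > 0, ∃ E, IsOpen E ∧ (∀ F, MapsTo f F F → F ⊆ G → F ⊆ E) ∧
      HasSmallDynCover f U E T (ε * Real.exp (s * T)) := by
  obtain ⟨q, hq, hq0⟩ : ∃ q : ℕ, Real.exp (-((s - r) * n * q)) < ε ∧ 0 < q := by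
    have hpos : 0 < (s - r) * n := mul_pos (sub_pos.2 hrs) (mod_cast hn)
    have hlim : Tendsto (fun q : ℕ ↦ Real.exp (-((s - r) * n * q))) atTop (𝓝 0) :=
      Real.tendsto_exp_neg_atTop_nhds_zero.comp
        (tendsto_natCast_atTop_atTop.const_mul_atTop hpos)
    exact ((hlim.eventually_lt_const hε).and (eventually_gt_atTop 0)).exists
  refine ⟨n * q, Nat.mul_pos hn hq0, ⋂ j < q, f^[n * j] ⁻¹' G, ?_, fun F hF hFG x hx ↦ ?_, ?_⟩
  · exact (finite_Iio q).isOpen_biInter fun j _ ↦ hGo.preimage (hf.iterate _)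
  · exact mem_iInter₂.2 fun j _ ↦ hFG (hF.iterate _ hx)
  · refine (hG.iInter_preimage q).mono subset_rfl le_rfl ?_
    calc Real.exp (r * n) ^ q
        = Real.exp (-((s - r) * n * q)) * Real.exp (s * (n * q : ℕ)) := by
          rw [← Real.exp_nat_mul, ← Real.exp_add]
          push_cast
          ring_nf
      _ ≤ ε * Real.exp (s * (n * q : ℕ)) := by gcongr

lemma of_sum_le_one {K : Set X} (hK : MapsTo f K K) {ι : Type*} {t : Finset ι} {E : ι → Set X}
    {T : ι → ℕ} {ε : ι → ℝ} {s : ℝ} (hs : 0 ≤ s) (hKE : K ⊆ ⋃ i ∈ t, E i)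
    (hT : ∀ i ∈ t, 0 < T i) (hsum : ∑ i ∈ t, ε i ≤ 1)
    (h : ∀ i ∈ t, HasSmallDynCover f U (E i) (T i) (ε i * Real.exp (s * T i))) (n : ℕ) :
    HasSmallDynCover f U K n (Real.exp (s * (n + t.sup T : ℕ))) := by
  induction n using Nat.strong_induction_on with
  | _ n ih =>
    rcases n.eq_zero_or_pos with rfl | hn
    · exact zero _ (Real.one_le_exp (by positivity))
    have hpiece : ∀ i ∈ t,
        HasSmallDynCover f U (K ∩ E i) n (ε i * Real.exp (s * (n + t.sup T : ℕ))) := by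
      intro i hi
      have hTi : T i ≤ t.sup T := Finset.le_sup hi
      have htail : HasSmallDynCover f U K (n - T i)
          (Real.exp (s * (n + t.sup T - T i : ℕ))) := by
        rcases le_total n (T i) with hnT | hTn
        · rw [Nat.sub_eq_zero_of_le hnT]
          exact zero _ (Real.one_le_exp (by positivity))
        · rw [Nat.sub_add_comm hTn]
          exact ih (n - T i) (Nat.sub_lt hn (hT i hi))
      refine ((h i hi).inter_preimage htail).mono
        (fun x hx ↦ ⟨hx.2, hK.iterate _ hx.1⟩) (by omega) (le_of_eq ?_)
      rw [mul_assoc, ← Real.exp_add, ← mul_add, ← Nat.cast_add,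
        Nat.add_sub_cancel' (hTi.trans (Nat.le_add_left _ _))]
    refine (biUnion hpiece).mono (fun x hx ↦ ?_) le_rfl ?_
    · rw [← inter_iUnion₂]
      exact ⟨hx, hKE hx⟩
    · rw [← Finset.sum_mul]
      exact mul_le_of_le_one_left (Real.exp_pos _).le hsum

lemma coverMincard_le (h : HasSmallDynCover f U F n c) :
    (coverMincard f F U n : ENNReal) ≤ ENNReal.ofReal c := by
  classical
  obtain ⟨S, hSc, hFS, hS⟩ := h
  rcases F.eq_empty_or_nonempty with rfl | ⟨x₀, -⟩
  · simp
  have : Nonempty X := ⟨x₀⟩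
  choose! p hp using fun (A : Set X) (hA : A.Nonempty) ↦ hA
  have hcov : IsDynCoverOf f F U n (S.image p : Finset X) := fun x hx ↦ by
    obtain ⟨A, hA, hxA⟩ := hFS hx
    exact ⟨p A, Finset.mem_coe.2 (Finset.mem_image_of_mem p hA), hS A hA x hxA _ (hp A ⟨x, hxA⟩)⟩
  calc (coverMincard f F U n : ENNReal) ≤ ((S.image p).card : ENNReal) :=
        mod_cast ENat.toENNReal_mono hcov.coverMincard_le_card
    _ ≤ (S.card : ENNReal) := mod_cast Finset.card_image_le
    _ = ENNReal.ofReal S.card := (ENNReal.ofReal_natCast _).symm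
    _ ≤ ENNReal.ofReal c := ENNReal.ofReal_le_ofReal hSc

lemma coverEntropyEntourage_le {s : ℝ} {M : ℕ}
    (h : ∀ n : ℕ, HasSmallDynCover f U F n (Real.exp (s * (n + M : ℕ)))) :
    coverEntropyEntourage f F U ≤ s := by
  rw [← ExpGrowth.expGrowthSup_exp (a := (s : EReal))]
  refine ExpGrowth.expGrowthSup_le_of_eventually_le (b := ENNReal.ofReal (Real.exp (s * M)))
    ENNReal.ofReal_ne_top (Eventually.of_forall fun n ↦ ?_)
  have hexp : EReal.exp ((s : EReal) * n) = ENNReal.ofReal (Real.exp (s * n)) :=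
    mod_cast EReal.exp_coe (s * n)
  calc (coverMincard f F U n : ENNReal) ≤ ENNReal.ofReal (Real.exp (s * (n + M : ℕ))) :=
        (h n).coverMincard_le
    _ = ENNReal.ofReal (Real.exp (s * M)) * EReal.exp ((s : EReal) * n) := by
        rw [hexp, ← ENNReal.ofReal_mul (Real.exp_pos _).le, ← Real.exp_add]
        push_cast
        ring_nf

end HasSmallDynCover

section

variable {X : Type*} {f : X → X} {F K : Set X}

lemma exists_isDynCoverOf_of_coverEntropyEntourage_lt {U : SetRel X X} {r : ℝ}
    (h : coverEntropyEntourage f F U < r) :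
    ∃ n > 0, ∃ S : Finset X, IsDynCoverOf f F U n S ∧ (S.card : ℝ) ≤ Real.exp (r * n) := by
  obtain ⟨n, hn, hpos⟩ := ((eventually_lt_of_limsup_lt h).and (eventually_gt_atTop 0)).exists
  have hlog : ENNReal.log (coverMincard f F U n) < ((r * n : ℝ) : EReal) := by
    rw [EReal.div_lt_iff (mod_cast hpos) (EReal.natCast_ne_top n)] at hn
    exact_mod_cast hn
  have hlt : (coverMincard f F U n : ENNReal) < ENNReal.ofReal (Real.exp (r * n)) := by
    rwa [← EReal.exp_coe, ← ENNReal.log_lt_log_iff, EReal.log_exp]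
  have hfin : coverMincard f F U n < ⊤ := by
    simpa using hlt.trans ENNReal.ofReal_lt_top
  obtain ⟨S, hS, hcard⟩ := (coverMincard_finite_iff f F U n).1 hfin
  refine ⟨n, hpos, S, hS, ?_⟩
  rw [← hcard, ENat.toENNReal_coe, ← ENNReal.ofReal_natCast] at hlt
  exact ((ENNReal.ofReal_lt_ofReal_iff (Real.exp_pos _)).1 hlt).le

lemma exists_isDynCoverOf_subset {U : SetRel X X} [U.IsSymm] {n : ℕ} {S N : Finset X}
    (hS : IsDynCoverOf f F U n S) (hN : IsDynCoverOf f K U n N) (hFK : F ⊆ K) :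
    ∃ T ⊆ N, T.card ≤ S.card ∧ IsDynCoverOf f F (U ○ U ○ U) n T := by
  classical
  obtain ⟨S', hS', hcard, hmeet⟩ := hS.nonempty_inter
  choose! y hxy hyF using hmeet
  choose! p hpN hyp using fun x (hx : x ∈ F) ↦ hN (hFK hx)
  refine ⟨S'.image (p ∘ y), ?_, Finset.card_image_le.trans hcard, fun z hz ↦ ?_⟩
  · exact Finset.image_subset_iff.2 fun x hx ↦ hpN _ (hyF x hx)
  · obtain ⟨x, hx, hzx⟩ := hS' hz
    refine ⟨p (y x), Finset.mem_coe.2 (Finset.mem_image_of_mem _ hx), ?_⟩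
    exact dynEntourage_comp_subset f _ _ n ⟨y x, dynEntourage_comp_subset f _ _ n
      ⟨x, hzx, hxy x hx⟩, hyp _ (hyF x hx)⟩

variable [UniformSpace X]

-- The open sets are unions of balls whose centers lie in a finite net of `K`, which is why finitely
-- many of them suffice for all `F`.
lemma exists_finite_isOpen_hasSmallDynCover (hf : Continuous f) (hK : IsCompact K)
    (hKf : MapsTo f K K) {V : SetRel X X} (hV : V ∈ 𝓤 X) :
    ∃ U ∈ 𝓤 X, ∀ n, ∃ 𝒢 : Set (Set X), 𝒢.Finite ∧ (∀ G ∈ 𝒢, IsOpen G) ∧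
      ∀ F ⊆ K, ∀ S : Finset X, IsDynCoverOf f F U n S →
        ∃ G ∈ 𝒢, F ⊆ G ∧ HasSmallDynCover f V G n S.card := by
  obtain ⟨W, hW, hWo, hWs, hWV⟩ := comp_open_symm_mem_uniformity_sets hV
  obtain ⟨U, hU, hUs, hUW⟩ := comp_comp_symm_mem_uniformity_sets hW
  refine ⟨U, hU, fun n ↦ ?_⟩
  obtain ⟨N, hN⟩ := exists_isDynCoverOf_of_isCompact_invariant hK hKf hU n
  refine ⟨(fun T : Finset X ↦ ⋃ x ∈ T, ball x (dynEntourage f W n)) '' {T | T ⊆ N},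
    (N.powerset.finite_toSet.subset fun _ hT ↦ Finset.mem_powerset.2 hT).image _, ?_, ?_⟩
  · rintro _ ⟨T, -, rfl⟩
    exact isOpen_biUnion fun x _ ↦ isOpen_ball x (isOpen.dynEntourage hf hWo n)
  · intro F hFK S hS
    obtain ⟨T, hTN, hcard, hT⟩ := exists_isDynCoverOf_subset hS hN hFK
    refine ⟨⋃ x ∈ T, ball x (dynEntourage f W n), ⟨T, hTN, rfl⟩, fun y hy ↦ ?_,
      (HasSmallDynCover.biUnion_ball hWV n T).mono subset_rfl le_rfl (mod_cast hcard)⟩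
    obtain ⟨x, hx, hyx⟩ := hT.of_entourage_subset hUW hy
    exact mem_iUnion₂_of_mem (Finset.mem_coe.1 hx) (SetRel.symm (dynEntourage f W n) hyx)

lemma exists_countable_isOpen_hasSmallDynCover (hf : Continuous f) (hK : IsCompact K)
    (hKf : MapsTo f K K) {V : SetRel X X} (hV : V ∈ 𝓤 X) (r : ℝ) :
    ∃ D : Set (Set X × ℕ), D.Countable ∧
      (∀ p ∈ D, IsOpen p.1 ∧ 0 < p.2 ∧ HasSmallDynCover f V p.1 p.2 (Real.exp (r * p.2))) ∧
      ∀ F ⊆ K, coverEntropy f F < r → ∃ p ∈ D, F ⊆ p.1 := by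
  obtain ⟨U, hU, hfinite⟩ := exists_finite_isOpen_hasSmallDynCover hf hK hKf hV
  choose 𝒢 h𝒢f h𝒢o h𝒢 using hfinite
  have hcount : (⋃ n, (fun G ↦ (G, n)) '' 𝒢 n).Countable :=
    countable_iUnion fun n ↦ ((h𝒢f n).image _).countable
  refine ⟨{p | p.1 ∈ 𝒢 p.2 ∧ 0 < p.2 ∧ HasSmallDynCover f V p.1 p.2 (Real.exp (r * p.2))},
    hcount.mono fun p hp ↦ mem_iUnion_of_mem p.2 (mem_image_of_mem _ hp.1),
    fun p hp ↦ ⟨h𝒢o _ _ hp.1, hp.2⟩, fun F hFK hFr ↦ ?_⟩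
  obtain ⟨n, hn, S, hS, hcard⟩ := exists_isDynCoverOf_of_coverEntropyEntourage_lt
    ((coverEntropyEntourage_le_coverEntropy f F hU).trans_lt hFr)
  obtain ⟨G, hG, hFG, hGS⟩ := h𝒢 n F hFK S hS
  exact ⟨(G, n), ⟨hG, hn, hGS.mono subset_rfl le_rfl hcard⟩, hFG⟩

variable {I : Type*} {Xs : I → Set X}

lemma coverEntropyEntourage_iUnion_le (hf : Continuous f) (hXs : ∀ i, MapsTo f (Xs i) (Xs i))
    (hK : IsCompact (⋃ i, Xs i)) {V : SetRel X X} (hV : V ∈ 𝓤 X) {r s : ℝ} (hs : 0 ≤ s)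
    (hrs : r < s) (h : ∀ i, coverEntropy f (Xs i) < r) :
    coverEntropyEntourage f (⋃ i, Xs i) V ≤ s := by
  have hKf : MapsTo f (⋃ i, Xs i) (⋃ i, Xs i) := mapsTo_iUnion_iUnion hXs
  obtain ⟨D, hD, hDsmall, hXD⟩ := exists_countable_isOpen_hasSmallDynCover hf hK hKf hV r
  obtain ⟨ε, hε, hsum⟩ := hD.exists_pos_forall_sum_le one_pos
  choose! T hT E hEo hE hEsmall using fun p hp ↦
    (hDsmall p hp).2.2.exists_isOpen_mul_exp hf (hDsmall p hp).1 (hDsmall p hp).2.1 hrs (hε p)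
  have hcover : ⋃ i, Xs i ⊆ ⋃ p ∈ D, E p := iUnion_subset fun i ↦ by
    obtain ⟨p, hp, hXp⟩ := hXD (Xs i) (subset_iUnion Xs i) (h i)
    exact (hE p hp _ (hXs i) hXp).trans (subset_biUnion_of_mem hp)
  obtain ⟨t, htD, htf, ht⟩ := hK.elim_finite_subcover_image hEo hcover
  lift t to Finset (Set X × ℕ) using htf
  exact HasSmallDynCover.coverEntropyEntourage_le <|
    HasSmallDynCover.of_sum_le_one hKf hs ht (fun p hp ↦ hT p (htD hp)) (hsum t htD)
      fun p hp ↦ hEsmall p (htD hp)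

theorem entropy_sup_of_invariant_closed_cover_general (hf : Continuous f)
    (hXs : ∀ i, MapsTo f (Xs i) (Xs i)) (hK : IsCompact (⋃ i, Xs i)) :
    coverEntropy f (⋃ i, Xs i) = ⨆ i, coverEntropy f (Xs i) := by
  refine le_antisymm ?_ (coverEntropy_iUnion_le f Xs)
  rcases (⋃ i, Xs i).eq_empty_or_nonempty with hempty | hne
  · simp [hempty]
  obtain ⟨i, hi⟩ := nonempty_iUnion.1 hne
  refine EReal.le_of_forall_lt_iff_le.1 fun s hs ↦ iSup₂_le fun V hV ↦ ?_
  obtain ⟨r, hr, hrs⟩ := EReal.lt_iff_exists_real_btwn.1 hs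
  have hs0 : (0 : EReal) ≤ s := (coverEntropy_nonneg f hi).trans ((le_iSup _ i).trans hs.le)
  exact coverEntropyEntourage_iUnion_le hf hXs hK hV (mod_cast hs0) (mod_cast hrs)
    fun j ↦ (le_iSup _ j).trans_lt hr

end

theorem entropy_sup_of_invariant_closed_cover
    {X : Type*} [MetricSpace X] [CompactSpace X] {I : Type*} [Nonempty I]
    (f : X → X) (hf : Continuous f) (hfs : Function.Surjective f)
    (Xs : I → Set X) (hclosed : ∀ i, IsClosed (Xs i))
    (hinv : ∀ i, f '' Xs i = Xs i) (hcover : ⋃ i, Xs i = Set.univ) :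
    Dynamics.coverEntropy f (Set.univ : Set X) =
      ⨆ i, Dynamics.coverEntropy f (Xs i) := by
  rw [← hcover]
  exact entropy_sup_of_invariant_closed_cover_general hf
    (fun i ↦ mapsTo_iff_image_subset.2 (hinv i).subset) (hcover ▸ isCompact_univ)
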